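/- Let T be a bounded linear operator on H admitting an A-adjoint. Then ω_A(T) ≤ (1/2) · sqrt( ‖T T^{♯_A} + T^{♯_A} T‖_A + 2 ω_A(T²) ) ≤ (√2/2) · sqrt( ‖T^{♯_A} T + T T^{♯_A}‖_A ). -/

import Mathlib

/-
For `‖x‖_A = 1`, rotate `T x` and `T^♯ x` by unimodular scalars so that their `A`-inner products
with `x`, both of modulus `|⟨T x, x⟩_A|`, become real and nonnegative. Cauchy–Schwarz applied to `x`
and the sum of the rotated vectors gives
`4 |⟨T x, x⟩_A|² ≤ ‖T x‖_A² + ‖T^♯ x‖_A² + 2 |⟨T² x, x⟩_A|`.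
The sum of the two squares is `⟨(T T^♯ + T^♯ T) x, x⟩_A`, and it also bounds
`2 |⟨T² x, x⟩_A| = 2 |⟨T x, T^♯ x⟩_A|`; taking suprema yields both inequalities.

The suprema defining `‖·‖_A` and `ω_A` are only meaningful once operators with an `A`-adjoint are
known to be bounded for `‖·‖_A`. For `A`-selfadjoint `S` the sequence `n ↦ ‖S^n x‖_A` is log-convex
and `O(‖S‖^n)`, which forces `‖S x‖_A ≤ ‖S‖ ‖x‖_A`; the general case follows by taking `S = T^♯ T`.
-/

noncomputable section

open ContinuousLinearMap

variable {H : Type*} [NormedAddCommGroup H] [InnerProductSpace ℂ H] [CompleteSpace H]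

/-- The semi-inner product induced by the positive operator `A`: `⟨x, y⟩_A := ⟨A x, y⟩`. -/
def innA (A : H →L[ℂ] H) (x y : H) : ℂ := inner ℂ (A x) y

/-- The seminorm induced by `A`: `‖x‖_A := ⟨x, x⟩_A ^ (1/2)`. -/
def vnormA (A : H →L[ℂ] H) (x : H) : ℝ := Real.sqrt (innA A x x).re

/-- The `A`-operator seminorm: `‖T‖_A := sup {‖T x‖_A : ‖x‖_A = 1}`. -/
def opNormA (A T : H →L[ℂ] H) : ℝ :=
  sSup {c : ℝ | ∃ x : H, vnormA A x = 1 ∧ c = vnormA A (T x)}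

/-- The `A`-numerical radius: `ω_A(T) := sup {|⟨T x, x⟩_A| : ‖x‖_A = 1}`. -/
def wA (A T : H →L[ℂ] H) : ℝ :=
  sSup {c : ℝ | ∃ x : H, vnormA A x = 1 ∧ c = ‖innA A (T x) x‖}

/-- `T` admits an `A`-adjoint: there is a bounded operator `X` with `A X = T* A`. -/
def HasAAdjoint (A T : H →L[ℂ] H) : Prop :=
  ∃ X : H →L[ℂ] H, A ∘L X = adjoint T ∘L A

/-- `X` is the reduced `A`-adjoint `T^{♯_A}` of `T`: it solves `A X = T* A` and its range
is contained in the closure of the range of `A`. -/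
def IsReducedAAdjoint (A T X : H →L[ℂ] H) : Prop :=
  (A ∘L X = adjoint T ∘L A) ∧ ∀ y : H, X y ∈ closure (Set.range A)

section RealSequences

lemma le_of_forall_pow_le_mul_pow {x y C : ℝ} (hy : 0 ≤ y) (h : ∀ n : ℕ, x ^ n ≤ C * y ^ n) :
    x ≤ y := by
  rcases hy.eq_or_lt with rfl | hy
  · simpa using h 1
  · by_contra! hlt
    obtain ⟨n, hn⟩ := pow_unbounded_of_one_lt C ((one_lt_div hy).2 hlt)
    rw [div_pow, lt_div_iff₀ (by positivity)] at hn
    exact (h n).not_gt hn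

variable {a : ℕ → ℝ}

lemma apply_one_mul_le_of_sq_le_mul (ha : ∀ n, 0 ≤ a n)
    (hlog : ∀ n, a (n + 1) ^ 2 ≤ a n * a (n + 2)) (n : ℕ) : a 1 * a n ≤ a 0 * a (n + 1) := by
  induction n with
  | zero => rw [mul_comm]
  | succ n ih =>
    rcases (ha (n + 1)).eq_or_lt with hzero | hpos
    · rw [← hzero, mul_zero]
      exact mul_nonneg (ha _) (ha _)
    · refine le_of_mul_le_mul_right ?_ hpos
      calc a 1 * a (n + 1) * a (n + 1) = a 1 * a (n + 1) ^ 2 := by ring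
        _ ≤ a 1 * (a n * a (n + 2)) := mul_le_mul_of_nonneg_left (hlog n) (ha 1)
        _ = a 1 * a n * a (n + 2) := by ring
        _ ≤ a 0 * a (n + 1) * a (n + 2) := mul_le_mul_of_nonneg_right ih (ha _)
        _ = a 0 * a (n + 2) * a (n + 1) := by ring

lemma apply_one_pow_mul_le_of_sq_le_mul (ha : ∀ n, 0 ≤ a n)
    (hlog : ∀ n, a (n + 1) ^ 2 ≤ a n * a (n + 2)) (n : ℕ) : a 1 ^ n * a 0 ≤ a 0 ^ n * a n := by
  induction n with
  | zero => simp
  | succ n ih =>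
    calc a 1 ^ (n + 1) * a 0 = a 1 * (a 1 ^ n * a 0) := by ring
      _ ≤ a 1 * (a 0 ^ n * a n) := mul_le_mul_of_nonneg_left ih (ha 1)
      _ = a 0 ^ n * (a 1 * a n) := by ring
      _ ≤ a 0 ^ n * (a 0 * a (n + 1)) :=
        mul_le_mul_of_nonneg_left (apply_one_mul_le_of_sq_le_mul ha hlog n) (pow_nonneg (ha 0) n)
      _ = a 0 ^ (n + 1) * a (n + 1) := by ring

lemma apply_one_le_mul_of_sq_le_mul_of_le_mul_pow (ha : ∀ n, 0 ≤ a n)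
    (hlog : ∀ n, a (n + 1) ^ 2 ≤ a n * a (n + 2)) {C M : ℝ} (hM : 0 ≤ M)
    (hbound : ∀ n, a n ≤ C * M ^ n) : a 1 ≤ M * a 0 := by
  rcases (ha 0).eq_or_lt with hzero | hpos
  · have hsq : a 1 ^ 2 ≤ 0 := by simpa [← hzero] using hlog 0
    rw [← hzero, mul_zero, pow_eq_zero_iff two_ne_zero |>.1 (hsq.antisymm (sq_nonneg _))]
  · refine le_of_forall_pow_le_mul_pow (C := C / a 0) (by positivity) fun n => ?_
    rw [div_mul_eq_mul_div, le_div_iff₀ hpos]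
    calc a 1 ^ n * a 0 ≤ a 0 ^ n * a n := apply_one_pow_mul_le_of_sq_le_mul ha hlog n
      _ ≤ a 0 ^ n * (C * M ^ n) := by gcongr; exact hbound n
      _ = C * (M * a 0) ^ n := by ring

end RealSequences

lemma norm_pow_apply_le {𝕜 E : Type*} [NontriviallyNormedField 𝕜] [SeminormedAddCommGroup E]
    [NormedSpace 𝕜 E] (S : E →L[𝕜] E) (x : E) (n : ℕ) : ‖(S ^ n) x‖ ≤ ‖S‖ ^ n * ‖x‖ := by
  induction n with
  | zero => simp
  | succ n ih =>
    rw [pow_succ', mul_apply_eq_comp, pow_succ', mul_assoc]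
    exact S.le_opNorm_of_le ih

section InnerProductSpace

variable {𝕜 E : Type*} [RCLike 𝕜] [SeminormedAddCommGroup E] [InnerProductSpace 𝕜 E]

lemma norm_smul_add_smul_sq_le {u v : 𝕜} (hu : ‖u‖ = 1) (hv : ‖v‖ = 1) (p q : E) :
    ‖u • p + v • q‖ ^ 2 ≤ ‖p‖ ^ 2 + ‖q‖ ^ 2 + 2 * ‖inner 𝕜 p q‖ := by
  have hcross : RCLike.re (inner 𝕜 (u • p) (v • q)) ≤ ‖inner 𝕜 p q‖ :=
    (RCLike.re_le_norm _).trans_eq (by simp [inner_smul_left, inner_smul_right, hu, hv])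
  rw [norm_add_sq (𝕜 := 𝕜), norm_smul, norm_smul, hu, hv, one_mul, one_mul]
  linarith

lemma norm_inner_add_norm_inner_sq_le (e p q : E) :
    (‖inner 𝕜 e p‖ + ‖inner 𝕜 e q‖) ^ 2 ≤
      ‖e‖ ^ 2 * (‖p‖ ^ 2 + ‖q‖ ^ 2 + 2 * ‖inner 𝕜 p q‖) := by
  obtain ⟨u, hu, hup⟩ := RCLike.exists_norm_eq_mul_self (inner 𝕜 e p)
  obtain ⟨v, hv, hvq⟩ := RCLike.exists_norm_eq_mul_self (inner 𝕜 e q)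
  have hsum : ((‖inner 𝕜 e p‖ + ‖inner 𝕜 e q‖ : ℝ) : 𝕜) = inner 𝕜 e (u • p + v • q) := by
    rw [inner_add_right, inner_smul_right, inner_smul_right, ← hup, ← hvq, RCLike.ofReal_add]
  have hle : ‖inner 𝕜 e p‖ + ‖inner 𝕜 e q‖ ≤ ‖e‖ * ‖u • p + v • q‖ := by
    calc ‖inner 𝕜 e p‖ + ‖inner 𝕜 e q‖ = ‖inner 𝕜 e (u • p + v • q)‖ := by
          rw [← hsum, RCLike.norm_of_nonneg (by positivity)]
      _ ≤ ‖e‖ * ‖u • p + v • q‖ := norm_inner_le_norm _ _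
  calc (‖inner 𝕜 e p‖ + ‖inner 𝕜 e q‖) ^ 2 ≤ (‖e‖ * ‖u • p + v • q‖) ^ 2 := by gcongr
    _ = ‖e‖ ^ 2 * ‖u • p + v • q‖ ^ 2 := mul_pow _ _ _
    _ ≤ ‖e‖ ^ 2 * (‖p‖ ^ 2 + ‖q‖ ^ 2 + 2 * ‖inner 𝕜 p q‖) := by
      gcongr; exact norm_smul_add_smul_sq_le hu hv p q

end InnerProductSpace

section SemiInnerProduct

variable {E : Type*} [NormedAddCommGroup E] [InnerProductSpace ℂ E] {A : E →L[ℂ] E}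

lemma vnormA_nonneg (x : E) : 0 ≤ vnormA A x := Real.sqrt_nonneg _

lemma opNormA_nonneg (T : E →L[ℂ] E) : 0 ≤ opNormA A T := by
  refine Real.sSup_nonneg ?_
  rintro _ ⟨x, -, rfl⟩
  exact vnormA_nonneg _

lemma innA_add_left (x y z : E) : innA A (x + y) z = innA A x z + innA A y z := by
  simp only [innA, map_add, inner_add_left]

lemma innA_add_right (x y z : E) : innA A x (y + z) = innA A x y + innA A x z :=
  inner_add_right _ _ _

/-- The semi-inner product `⟨·, ·⟩_A` as a pre-inner product structure on the underlying vector
space, through which general facts on seminormed inner product spaces apply to it. Its seminorm is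
definitionally `vnormA A`. -/
abbrev innACore (hA : A.IsPositive) : PreInnerProductSpace.Core ℂ E where
  inner := innA A
  conj_inner_symm x y := (inner_conj_symm _ _).trans (hA.isSymmetric x y).symm
  re_inner_nonneg := hA.re_inner_nonneg_left
  add_left := innA_add_left
  smul_left x y c := by rw [innA, map_smul, inner_smul_left]; rfl

lemma innA_conj_symm (hA : A.IsPositive) (x y : E) :
    starRingEnd ℂ (innA A y x) = innA A x y :=
  (innACore hA).conj_inner_symm x y

lemma norm_innA_symm (hA : A.IsPositive) (x y : E) : ‖innA A x y‖ = ‖innA A y x‖ := by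
  rw [← innA_conj_symm hA, RCLike.norm_conj]

-- In this lemma and the next two, `(_)` stops instance search from supplying the seminorm of `E`
-- itself in place of `vnormA A`.
lemma innA_self_eq_vnormA_sq (hA : A.IsPositive) (x : E) : innA A x x = (vnormA A x : ℂ) ^ 2 :=
  @inner_self_eq_norm_sq_to_K ℂ E _ (_) (InnerProductSpace.ofCore (innACore hA)) x

lemma norm_innA_le_vnormA_mul_vnormA (hA : A.IsPositive) (x y : E) :
    ‖innA A x y‖ ≤ vnormA A x * vnormA A y :=
  @norm_inner_le_norm ℂ E _ (_) (InnerProductSpace.ofCore (innACore hA)) x y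

lemma norm_innA_add_norm_innA_sq_le (hA : A.IsPositive) (x y z : E) :
    (‖innA A x y‖ + ‖innA A x z‖) ^ 2 ≤
      vnormA A x ^ 2 * (vnormA A y ^ 2 + vnormA A z ^ 2 + 2 * ‖innA A y z‖) :=
  @norm_inner_add_norm_inner_sq_le ℂ E _ (_) (InnerProductSpace.ofCore (innACore hA)) x y z

lemma vnormA_le_sqrt_norm_mul_norm (x : E) : vnormA A x ≤ √‖A‖ * ‖x‖ := by
  refine Real.sqrt_le_iff.2 ⟨by positivity, ?_⟩
  calc (innA A x x).re ≤ ‖A x‖ * ‖x‖ := re_inner_le_norm (𝕜 := ℂ) _ _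
    _ ≤ ‖A‖ * ‖x‖ * ‖x‖ := by gcongr; exact A.le_opNorm x
    _ = (√‖A‖ * ‖x‖) ^ 2 := by rw [mul_pow, Real.sq_sqrt (norm_nonneg _)]; ring

end SemiInnerProduct

/-- `X` is an `A`-adjoint of `T`, expressed by the semi-inner product: this is the equation
`A X = T* A` in a form that makes sense even when `T*` does not exist. Unlike
`IsReducedAAdjoint`, it does not determine `X` when `A` is not injective. -/
def IsAAdjoint {E : Type*} [NormedAddCommGroup E] [InnerProductSpace ℂ E] (A T X : E →L[ℂ] E) :
    Prop :=
  ∀ x y, innA A (X x) y = innA A x (T y)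

lemma IsReducedAAdjoint.isAAdjoint {A T X : H →L[ℂ] H} (h : IsReducedAAdjoint A T X) :
    IsAAdjoint A T X := by
  intro x y
  have happly : A (X x) = adjoint T (A x) := DFunLike.congr_fun h.1 x
  rw [innA, happly, adjoint_inner_left, innA]

namespace IsAAdjoint

variable {E : Type*} [NormedAddCommGroup E] [InnerProductSpace ℂ E] {A S T X Y : E →L[ℂ] E}

protected lemma symm (hA : A.IsPositive) (h : IsAAdjoint A T X) : IsAAdjoint A X T := by
  intro x y
  rw [← innA_conj_symm hA, ← h, innA_conj_symm hA]

protected lemma add (hS : IsAAdjoint A S X) (hT : IsAAdjoint A T Y) :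
    IsAAdjoint A (S + T) (X + Y) := by
  intro x y
  rw [add_apply, add_apply, innA_add_left, innA_add_right, hS, hT]

protected lemma mul (hS : IsAAdjoint A S X) (hT : IsAAdjoint A T Y) :
    IsAAdjoint A (S * T) (Y * X) := by
  intro x y
  rw [mul_apply_eq_comp, mul_apply_eq_comp, hT, hS]

lemma vnormA_apply_sq_le (hA : A.IsPositive) (h : IsAAdjoint A T X) (x : E) :
    vnormA A (T x) ^ 2 ≤ vnormA A x * vnormA A (X (T x)) := by
  have hinn : innA A x (X (T x)) = (vnormA A (T x) : ℂ) ^ 2 := by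
    rw [← h.symm hA, innA_self_eq_vnormA_sq hA]
  calc vnormA A (T x) ^ 2 = ‖innA A x (X (T x))‖ := by simp [hinn]
    _ ≤ vnormA A x * vnormA A (X (T x)) := norm_innA_le_vnormA_mul_vnormA hA _ _

lemma vnormA_apply_le_of_self (hA : A.IsPositive) (h : IsAAdjoint A S S) (x : E) :
    vnormA A (S x) ≤ ‖S‖ * vnormA A x := by
  have hlog (n : ℕ) : vnormA A ((S ^ (n + 1)) x) ^ 2 ≤
      vnormA A ((S ^ n) x) * vnormA A ((S ^ (n + 2)) x) := by
    simpa only [pow_succ', mul_apply_eq_comp] using h.vnormA_apply_sq_le hA ((S ^ n) x)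
  have hgrowth (n : ℕ) : vnormA A ((S ^ n) x) ≤ √‖A‖ * ‖x‖ * ‖S‖ ^ n :=
    calc vnormA A ((S ^ n) x) ≤ √‖A‖ * ‖(S ^ n) x‖ := vnormA_le_sqrt_norm_mul_norm _
      _ ≤ √‖A‖ * (‖S‖ ^ n * ‖x‖) := by gcongr; exact norm_pow_apply_le S x n
      _ = √‖A‖ * ‖x‖ * ‖S‖ ^ n := by ring
  simpa using apply_one_le_mul_of_sq_le_mul_of_le_mul_pow (a := fun n => vnormA A ((S ^ n) x))
    (fun _ => vnormA_nonneg _) hlog (norm_nonneg S) hgrowth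

lemma vnormA_apply_le (hA : A.IsPositive) (h : IsAAdjoint A T X) (x : E) :
    vnormA A (T x) ≤ √‖X * T‖ * vnormA A x := by
  refine le_of_sq_le_sq ?_ (mul_nonneg (Real.sqrt_nonneg _) (vnormA_nonneg _))
  calc vnormA A (T x) ^ 2 ≤ vnormA A x * vnormA A ((X * T) x) := h.vnormA_apply_sq_le hA x
    _ ≤ vnormA A x * (‖X * T‖ * vnormA A x) :=
      mul_le_mul_of_nonneg_left (((h.symm hA).mul h).vnormA_apply_le_of_self hA x)
        (vnormA_nonneg x)
    _ = (√‖X * T‖ * vnormA A x) ^ 2 := by rw [mul_pow, Real.sq_sqrt (norm_nonneg _)]; ring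

lemma vnormA_apply_le_opNormA (hA : A.IsPositive) (h : IsAAdjoint A T X) {x : E}
    (hx : vnormA A x = 1) : vnormA A (T x) ≤ opNormA A T := by
  refine le_csSup ⟨√‖X * T‖, ?_⟩ ⟨x, hx, rfl⟩
  rintro _ ⟨y, hy, rfl⟩
  simpa [hy] using h.vnormA_apply_le hA y

lemma norm_innA_apply_self_le_opNormA (hA : A.IsPositive) (h : IsAAdjoint A T X) {x : E}
    (hx : vnormA A x = 1) : ‖innA A (T x) x‖ ≤ opNormA A T :=
  calc ‖innA A (T x) x‖ ≤ vnormA A (T x) * vnormA A x := norm_innA_le_vnormA_mul_vnormA hA _ _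
    _ = vnormA A (T x) := by rw [hx, mul_one]
    _ ≤ opNormA A T := h.vnormA_apply_le_opNormA hA hx

lemma norm_innA_apply_self_le_wA (hA : A.IsPositive) (h : IsAAdjoint A T X) {x : E}
    (hx : vnormA A x = 1) : ‖innA A (T x) x‖ ≤ wA A T := by
  refine le_csSup ⟨opNormA A T, ?_⟩ ⟨x, hx, rfl⟩
  rintro _ ⟨y, hy, rfl⟩
  exact h.norm_innA_apply_self_le_opNormA hA hy

lemma innA_anticommutator_apply_self (hA : A.IsPositive) (h : IsAAdjoint A T X) (x : E) :
    innA A ((T * X + X * T) x) x = (vnormA A (T x) : ℂ) ^ 2 + (vnormA A (X x) : ℂ) ^ 2 := by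
  rw [add_apply, innA_add_left, mul_apply_eq_comp, mul_apply_eq_comp, h, h.symm hA,
    innA_self_eq_vnormA_sq hA, innA_self_eq_vnormA_sq hA, add_comm]

lemma vnormA_sq_add_vnormA_sq_le_opNormA (hA : A.IsPositive) (h : IsAAdjoint A T X) {x : E}
    (hx : vnormA A x = 1) :
    vnormA A (T x) ^ 2 + vnormA A (X x) ^ 2 ≤ opNormA A (T * X + X * T) := by
  have hself : IsAAdjoint A (T * X + X * T) (T * X + X * T) :=
    (h.mul (h.symm hA)).add ((h.symm hA).mul h)
  have hnorm : ‖innA A ((T * X + X * T) x) x‖ = vnormA A (T x) ^ 2 + vnormA A (X x) ^ 2 := by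
    rw [h.innA_anticommutator_apply_self hA]
    exact_mod_cast Complex.norm_of_nonneg (by positivity)
  exact hnorm ▸ hself.norm_innA_apply_self_le_opNormA hA hx

lemma innA_mul_self_apply_self (hA : A.IsPositive) (h : IsAAdjoint A T X) (x : E) :
    innA A ((T * T) x) x = innA A (T x) (X x) := by
  rw [mul_apply_eq_comp, h.symm hA]

lemma wA_mul_self_le (hA : A.IsPositive) (h : IsAAdjoint A T X) :
    wA A (T * T) ≤ opNormA A (T * X + X * T) / 2 := by
  refine Real.sSup_le ?_ (div_nonneg (opNormA_nonneg _) zero_le_two)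
  rintro _ ⟨x, hx, rfl⟩
  rw [h.innA_mul_self_apply_self hA]
  linarith [norm_innA_le_vnormA_mul_vnormA hA (T x) (X x),
    two_mul_le_add_sq (vnormA A (T x)) (vnormA A (X x)),
    h.vnormA_sq_add_vnormA_sq_le_opNormA hA hx]

lemma four_mul_norm_innA_apply_self_sq_le (hA : A.IsPositive) (h : IsAAdjoint A T X) {x : E}
    (hx : vnormA A x = 1) :
    4 * ‖innA A (T x) x‖ ^ 2 ≤
      vnormA A (T x) ^ 2 + vnormA A (X x) ^ 2 + 2 * ‖innA A ((T * T) x) x‖ := by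
  have hadj : ‖innA A x (X x)‖ = ‖innA A (T x) x‖ := by rw [h.symm hA]
  have hrot := norm_innA_add_norm_innA_sq_le hA x (T x) (X x)
  rw [norm_innA_symm hA x (T x), hadj, hx, ← h.innA_mul_self_apply_self hA] at hrot
  linarith

lemma wA_le_half_mul_sqrt (hA : A.IsPositive) (h : IsAAdjoint A T X) :
    wA A T ≤ (1 / 2) * √(opNormA A (T * X + X * T) + 2 * wA A (T * T)) := by
  refine Real.sSup_le ?_ (by positivity)
  rintro _ ⟨x, hx, rfl⟩
  have hsq : (2 * ‖innA A (T x) x‖) ^ 2 ≤ opNormA A (T * X + X * T) + 2 * wA A (T * T) := by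
    linarith [h.four_mul_norm_innA_apply_self_sq_le hA hx,
      h.vnormA_sq_add_vnormA_sq_le_opNormA hA hx, (h.mul h).norm_innA_apply_self_le_wA hA hx]
  linarith [Real.le_sqrt_of_sq_le hsq]

end IsAAdjoint

theorem stmt10_general {E : Type*} [NormedAddCommGroup E] [InnerProductSpace ℂ E]
    {A T X : E →L[ℂ] E} (hA : A.IsPositive) (h : IsAAdjoint A T X) :
    wA A T ≤ (1 / 2) * √(opNormA A (T * X + X * T) + 2 * wA A (T * T)) ∧
      (1 / 2) * √(opNormA A (T * X + X * T) + 2 * wA A (T * T)) ≤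
        (√2 / 2) * √(opNormA A (X * T + T * X)) := by
  refine ⟨h.wA_le_half_mul_sqrt hA, ?_⟩
  calc (1 / 2) * √(opNormA A (T * X + X * T) + 2 * wA A (T * T))
      ≤ (1 / 2) * √(2 * opNormA A (T * X + X * T)) := by
        gcongr
        linarith [h.wA_mul_self_le hA]
    _ = (√2 / 2) * √(opNormA A (X * T + T * X)) := by
        rw [Real.sqrt_mul zero_le_two, add_comm (X * T)]
        ring

theorem stmt10 (A : H →L[ℂ] H) (hA : A.IsPositive) (hA0 : A ≠ 0)
    (T Tsharp : H →L[ℂ] H) (hT : IsReducedAAdjoint A T Tsharp) :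
    wA A T ≤
        (1 / 2) * Real.sqrt (opNormA A (T * Tsharp + Tsharp * T) + 2 * wA A (T * T)) ∧
      (1 / 2) * Real.sqrt (opNormA A (T * Tsharp + Tsharp * T) + 2 * wA A (T * T)) ≤
        (Real.sqrt 2 / 2) * Real.sqrt (opNormA A (Tsharp * T + T * Tsharp)) :=
  stmt10_general hA hT.isAAdjoint
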